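/- Let p be a prime, let L be a field of characteristic p with algebraic closure L̄, let α, β ∈ L, and let d ≥ 2 be an integer. For λ ∈ L̄ let f_λ(x) = x^d + λ. Then the set of λ ∈ L̄ such that both α and β (viewed in L̄) are preperiodic under f_λ is infinite if and only if at least one of the following holds: (1) both α and β are algebraic over the prime field 𝔽_p; (2) d = p^ℓ for some positive integer ℓ and β − α is algebraic over 𝔽_p; (3) α^d = β^d. -/

import Mathlib

set_option linter.unusedSectionVars false

open Polynomial


/-- `lam` is a parameter for which `x` is preperiodic. -/
def SPP {K : Type*} [Field K] (d : ℕ) (lam x : K) : Prop :=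
  ∃ m n : ℕ, m < n ∧ (fun x : K => x ^ d + lam)^[m] x = (fun x : K => x ^ d + lam)^[n] x

/-- iterates -/
def sit {K : Type*} [Field K] (d : ℕ) (lam x : K) (n : ℕ) : K :=
  (fun x : K => x ^ d + lam)^[n] x

section basics
variable {K : Type*} [Field K] {d : ℕ} {lam x y : K}

lemma sit_zero : sit d lam x 0 = x := rfl

lemma sit_succ (n : ℕ) : sit d lam x (n+1) = (sit d lam x n)^d + lam := by
  unfold sit; rw [Function.iterate_succ_apply']

lemma spp_iff : SPP d lam x ↔ ∃ m n : ℕ, m < n ∧ sit d lam x m = sit d lam x n := Iff.rfl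

lemma sit_add (m n : ℕ) : sit d lam (sit d lam x m) n = sit d lam x (m+n) := by
  unfold sit; rw [← Function.iterate_add_apply, add_comm]

lemma SPP.shift (h : SPP d lam x) (k : ℕ) : SPP d lam (sit d lam x k) := by
  obtain ⟨m, n, hmn, h⟩ := spp_iff.1 h
  refine spp_iff.2 ⟨m, n, hmn, ?_⟩
  rw [sit_add, sit_add, add_comm k m, add_comm k n, ← sit_add, ← sit_add, h]

lemma sit_map {K' : Type*} [Field K'] (f : K →+* K') (n : ℕ) :
    sit d (f lam) (f x) n = f (sit d lam x n) := by
  induction n with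
  | zero => rfl
  | succ n ih => rw [sit_succ, sit_succ, ih]; simp

lemma spp_map {K' : Type*} [Field K'] (f : K →+* K') :
    SPP d (f lam) (f x) ↔ SPP d lam x := by
  rw [spp_iff, spp_iff]
  simp only [sit_map, f.injective.eq_iff]

/-- iterates as polynomials in the parameter -/
noncomputable def sP (d : ℕ) (x : K) : ℕ → K[X]
  | 0 => C x
  | n+1 => (sP d x n)^d + X

lemma sP_eval (n : ℕ) : (sP d x n).eval lam = sit d lam x n := by
  induction n with
  | zero => simp [sP, sit_zero]
  | succ n ih => simp [sP, sit_succ, ih]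

lemma sP_monic_deg (hd : 2 ≤ d) (n : ℕ) :
    (sP d x (n+1)).Monic ∧ (sP d x (n+1)).natDegree = d^n := by
  induction n with
  | zero =>
    have : sP d x 1 = X + C (x^d) := by simp [sP, add_comm]
    rw [this]; exact ⟨monic_X_add_C _, by rw [natDegree_X_add_C, pow_zero]⟩
  | succ n ih =>
    obtain ⟨h1, h2⟩ := ih
    have h3 : ((sP d x (n+1))^d).natDegree = d^(n+1) := by
      rw [h1.natDegree_pow, h2, pow_succ, mul_comm]
    have h4 : (X : K[X]).degree < ((sP d x (n+1))^d).degree := by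
      apply degree_lt_degree
      rw [h3, natDegree_X]
      exact Nat.one_lt_pow (by omega) (by omega)
    constructor
    · exact (h1.pow d).add_of_left h4
    · change ((sP d x (n+1))^d + X).natDegree = _
      rw [natDegree_add_eq_left_of_degree_lt h4, h3]

end basics

section val
variable {K : Type*} [Field K] {d : ℕ} {lam x y : K}
variable {Γ₀ : Type*} [LinearOrderedCommGroupWithZero Γ₀] (v : Valuation K Γ₀)

lemma not_spp_of_escape (hd : 2 ≤ d) (h1 : 1 < v x) (h2 : v lam < (v x)^d) : ¬ SPP d lam x := by
  have key : ∀ n, 1 < v (sit d lam x n) ∧ v lam < (v (sit d lam x n))^d ∧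
      v (sit d lam x n) < v (sit d lam x (n+1)) := by
    have step : ∀ z : K, 1 < v z → v lam < (v z)^d → v z < v (z^d + lam) ∧ v (z^d+lam) = v z ^ d := by
      intro z hz1 hz2
      have : v (z^d + lam) = v z ^ d := by
        rw [Valuation.map_add_eq_of_lt_left]
        · simp
        · simpa using hz2
      refine ⟨?_, this⟩
      rw [this]
      calc v z = v z ^ 1 := (pow_one _).symm
        _ < v z ^ d := pow_lt_pow_right₀ hz1 (by omega)
    intro n
    induction n with
    | zero => exact ⟨h1, h2, by rw [sit_succ]; exact (step _ h1 h2).1⟩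
    | succ n ih =>
      obtain ⟨a, b, c⟩ := ih
      have s := step _ a b
      rw [← sit_succ] at s
      have a' := a.trans s.1
      have b' : v lam < v (sit d lam x (n+1)) ^ d := by
        refine b.trans ?_
        exact pow_lt_pow_left₀ s.1 zero_le (by omega)
      refine ⟨a', b', ?_⟩
      rw [sit_succ (n+1)]
      exact (step _ a' b').1
  have mono : StrictMono (fun n => v (sit d lam x n)) := strictMono_nat_of_lt_succ (fun n => (key n).2.2)
  intro h
  obtain ⟨m, n, hmn, h⟩ := spp_iff.1 h
  have := mono hmn
  simp [h] at this

lemma spp_big (hd : 2 ≤ d) (hl : 1 < v lam) (h : SPP d lam x) : (v x)^d = v lam := by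
  have g : ∀ z, SPP d lam z → (v z)^d ≤ v lam := by
    intro z hz
    by_contra! hlt
    have : 1 < v z := by
      by_contra! h1
      have := pow_le_one₀ (n := d) zero_le h1
      exact absurd (hl.trans hlt) (not_lt.2 this)
    exact not_spp_of_escape v hd this hlt hz
  rcases (g x h).lt_or_eq with h1 | h1
  · exfalso
    have h2 := g _ (h.shift 1)
    rw [sit_succ, sit_zero, Valuation.map_add_eq_of_lt_right _ (by simpa using h1)] at h2
    have : v lam ^ 1 < v lam ^ d := pow_lt_pow_right₀ hl (by omega)
    rw [pow_one] at this
    exact absurd this (not_lt.2 h2)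
  · exact h1

lemma spp_small (hd : 2 ≤ d) (hl : v lam ≤ 1) (h : SPP d lam x) : v x ≤ 1 := by
  by_contra! h1
  exact not_spp_of_escape v hd h1 (hl.trans_lt (one_lt_pow₀ h1 (by omega))) h

lemma spp_lam_small (hd : 2 ≤ d) (hx : v x ≤ 1) (h : SPP d lam x) : v lam ≤ 1 := by
  by_contra! h1
  have := spp_big v hd h1 h
  exact absurd (this ▸ h1) (not_lt.2 (pow_le_one₀ zero_le hx))

lemma spp_lam_big (hd : 2 ≤ d) (hx : 1 < v x) (h : SPP d lam x) : 1 < v lam ∧ v lam = (v x)^d := by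
  have : 1 < v lam := by
    by_contra! h1
    exact absurd hx (not_lt.2 (spp_small v hd h1 h))
  exact ⟨this, (spp_big v hd this h).symm⟩

/-- all points in the orbits of two preperiodic points have the same absolute value -/
lemma spp_val (hd : 2 ≤ d) (hx : 1 < v x) (h : SPP d lam x) (hy : SPP d lam y) (n : ℕ) :
    v (sit d lam y n) = v x := by
  obtain ⟨h1, h2⟩ := spp_lam_big v hd hx h
  have := spp_big v hd h1 (hy.shift n)
  rw [h2] at this
  exact (pow_left_inj₀ zero_le zero_le (by omega)).1 this

lemma spp_val_small (hd : 2 ≤ d) (hx : v x ≤ 1) (h : SPP d lam x) (hy : SPP d lam y) (n : ℕ) :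
    v (sit d lam y n) ≤ 1 := 
  spp_small v hd (spp_lam_small v hd hx h) (hy.shift n)

end val

section consts
variable {p : ℕ} [Fact p.Prime] {K : Type*} [Field K] [Algebra (ZMod p) K]

lemma val_const {Γ₀ : Type*} [LinearOrderedCommGroupWithZero Γ₀] (v : Valuation K Γ₀) {z : K}
    (hz : IsAlgebraic (ZMod p) z) (h0 : z ≠ 0) : v z = 1 := by
  have hi := hz.isIntegral
  have : FiniteDimensional (ZMod p) (IntermediateField.adjoin (ZMod p) {z}) :=
    IntermediateField.adjoin.finiteDimensional hi
  have : Finite (IntermediateField.adjoin (ZMod p) {z}) := Module.finite_of_finite (ZMod p)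
  let g := IntermediateField.AdjoinSimple.gen (ZMod p) z
  have hg : (g : K) = z := rfl
  have g0 : g ≠ 0 := fun h => h0 (by rw [← hg, h]; rfl)
  obtain ⟨k, hk, hk'⟩ := isOfFinOrder_iff_pow_eq_one.1 (isOfFinOrder_of_finite (Units.mk0 g g0))
  have : g^k = 1 := by simpa [Units.ext_iff] using hk'
  have : z^k = 1 := by rw [← hg]; exact_mod_cast congrArg Subtype.val this
  have h2 : (v z)^k = 1 := by rw [← map_pow, this, map_one]
  exact (pow_eq_one_iff_of_nonneg zero_le hk.ne').1 h2

lemma val_const_le {Γ₀ : Type*} [LinearOrderedCommGroupWithZero Γ₀] (v : Valuation K Γ₀) {z : K}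
    (hz : IsAlgebraic (ZMod p) z) : v z ≤ 1 := by
  by_cases h : z = 0
  · simp [h]
  · exact (val_const v hz h).le

lemma exists_valuation {z : K} (hz : ¬ IsAlgebraic (ZMod p) z) :
    ∃ V : ValuationSubring K, 1 < V.valuation z := by
  have hz' : z ∉ (integralClosure (ZMod p) K).toSubring := fun h => hz (IsIntegral.isAlgebraic h)
  have : IsIntegrallyClosedIn (integralClosure (ZMod p) K).toSubring K :=
    inferInstanceAs (IsIntegrallyClosedIn (integralClosure (ZMod p) K) K)
  obtain ⟨V, -, hV⟩ := Subring.exists_le_valuationSubring_of_isIntegrallyClosedIn hz'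
  refine ⟨V, ?_⟩
  rw [← not_le, V.valuation_le_one_iff]; exact hV

lemma isAlgebraic_of_val {z : K} (h : ∀ V : ValuationSubring K, V.valuation z ≤ 1) :
    IsAlgebraic (ZMod p) z := by
  by_contra hz
  obtain ⟨V, hV⟩ := exists_valuation hz
  exact absurd hV (not_lt.2 (h V))

end consts

set_option linter.unusedSectionVars false

lemma rou_alg {p : ℕ} [Fact p.Prime] {K : Type*} [Field K] [Algebra (ZMod p) K] {e : ℕ} (he : 0 < e) {s : K} (hs : s ∈ nthRootsFinset e (1 : K)) : IsAlgebraic (ZMod p) s := by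
  rw [mem_nthRootsFinset he] at hs
  refine IsIntegral.isAlgebraic (IsIntegral.of_pow he ?_)
  rw [hs]; exact isIntegral_one

lemma rou_val (p : ℕ) [Fact p.Prime] {K : Type*} [Field K] [Algebra (ZMod p) K] {e : ℕ} {Γ₀ : Type*}
    [LinearOrderedCommGroupWithZero Γ₀] (v : Valuation K Γ₀) (he : 0 < e) {s : K} (hs : s ∈ nthRootsFinset e (1 : K)) : v s = 1 := by
  refine val_const (p := p) v (rou_alg he hs) ?_
  rintro rfl
  rw [mem_nthRootsFinset he, zero_pow he.ne'] at hs
  exact zero_ne_one hs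

lemma rou_sub_val (p : ℕ) [Fact p.Prime] {K : Type*} [Field K] [Algebra (ZMod p) K] {e : ℕ} {Γ₀ : Type*}
    [LinearOrderedCommGroupWithZero Γ₀] (v : Valuation K Γ₀) (he : 0 < e) {s t : K} (hs : s ∈ nthRootsFinset e (1 : K))
    (ht : t ∈ nthRootsFinset e (1 : K)) (h : s ≠ t) : v (s - t) = 1 :=
  val_const (p := p) v ((rou_alg he hs).sub (rou_alg he ht)) (sub_ne_zero.2 h)

lemma other_root (p : ℕ) [Fact p.Prime] {K : Type*} [Field K] [Algebra (ZMod p) K] {e : ℕ} {Γ₀ : Type*}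
    [LinearOrderedCommGroupWithZero Γ₀] (v : Valuation K Γ₀) (he : 0 < e) {X Y : K} {s t : K}
    (hs : s ∈ nthRootsFinset e (1 : K)) (ht : t ∈ nthRootsFinset e (1 : K)) (hst : s ≠ t)
    (h : v (X - s * Y) < v Y) : v (X - t * Y) = v Y := by
  have h1 : v ((s - t) * Y) = v Y := by
    rw [map_mul, rou_sub_val p v he hs ht hst, one_mul]
  have : X - t * Y = (X - s * Y) + (s - t) * Y := by ring
  rw [this, Valuation.map_add_eq_of_lt_right _ (by rw [h1]; exact h), h1]

section rou
variable {p : ℕ} [Fact p.Prime] {K : Type*} [Field K] [CharP K p] [Algebra (ZMod p) K]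
variable {l e : ℕ} {ζ : K}
variable {Γ₀ : Type*} [LinearOrderedCommGroupWithZero Γ₀] (v : Valuation K Γ₀)

/-- small elements -/
def Sm (d : ℕ) (z : K) : Prop := v z ≤ 1 ∧ (3 ≤ d → v z < 1)

variable {v} in
lemma Sm.add {d : ℕ} {a b : K} (ha : Sm v d a) (hb : Sm v d b) : Sm v d (a + b) :=
  ⟨(v.map_add a b).trans (max_le ha.1 hb.1), fun h => v.map_add_lt (ha.2 h) (hb.2 h)⟩

variable {v} in
lemma Sm.mul {d : ℕ} {a b : K} (hb : Sm v d b) (ha : v a = 1) : Sm v d (a * b) := by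
  unfold Sm; rw [map_mul, ha, one_mul]; exact hb

variable {v} in
lemma Sm.neg {d : ℕ} {b : K} (hb : Sm v d b) : Sm v d (-b) := by
  unfold Sm; rw [Valuation.map_neg]; exact hb

lemma lemmaA (hζ : IsPrimitiveRoot ζ e) (he : 2 ≤ e) {X Y : K}
    (hY : 1 < v Y) (h : v (X ^ (p^l * e) - Y ^ (p^l*e)) ≤ v Y) :
    ∃ s ∈ nthRootsFinset e (1 : K), Sm v (p^l*e) (X - s * Y) := by
  classical
  have hp := (Fact.out : p.Prime)
  have hq : 0 < p^l := pow_pos hp.pos l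
  have hfac : X ^ (p^l * e) - Y ^ (p^l*e) = (∏ s ∈ nthRootsFinset e (1 : K), (X - s * Y))^(p^l) := by
    rw [← hζ.pow_sub_pow_eq_prod_sub_mul _ _ (by omega), sub_pow_char_pow, ← pow_mul, ← pow_mul,
      mul_comm]
  rw [hfac, map_pow, map_prod] at h
  have hex : ∃ s ∈ nthRootsFinset e (1 : K), v (X - s * Y) < v Y := by
    by_contra! hall
    have h1 : v Y ^ e ≤ ∏ s ∈ nthRootsFinset e (1 : K), v (X - s * Y) := by
      have hc : v Y ^ e = ∏ s ∈ nthRootsFinset e (1 : K), v Y := by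
        rw [Finset.prod_const, hζ.card_nthRootsFinset]
      rw [hc]
      exact Finset.prod_le_prod (fun _ _ => zero_le) hall
    have h2 : v Y ^ (e * p^l) ≤ v Y ^ 1 := by
      rw [pow_mul, pow_one]
      exact (pow_le_pow_left₀ zero_le h1 _).trans h
    have h3 := (pow_le_pow_iff_right₀ hY).1 h2
    nlinarith
  obtain ⟨s, hs, hs1⟩ := hex
  refine ⟨s, hs, ?_⟩
  have h4 : ∏ s ∈ nthRootsFinset e (1 : K), v (X - s * Y) = v (X - s * Y) * v Y ^ (e-1) := by
    rw [← Finset.mul_prod_erase _ _ hs]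
    congr 1
    have hc : v Y ^ (e-1) = ∏ s ∈ (nthRootsFinset e (1 : K)).erase s, v Y := by
      rw [Finset.prod_const, Finset.card_erase_of_mem hs, hζ.card_nthRootsFinset]
    rw [hc]
    apply Finset.prod_congr rfl
    intro t ht
    rw [Finset.mem_erase] at ht
    exact other_root p v (by omega) hs ht.2 ht.1.symm hs1
  rw [h4, mul_pow, ← pow_mul] at h
  have hm : 1 ≤ (e-1) * p^l := Nat.one_le_iff_ne_zero.2 (Nat.mul_ne_zero (by omega) hq.ne')
  have hYpos : 0 < v Y := zero_lt_one.trans hY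
  constructor
  · by_contra! h5
    have h6 : 1 < v (X - s * Y) ^ p^l := one_lt_pow₀ h5 hq.ne'
    have h7 : v Y ≤ v Y ^ ((e-1) * p^l) := le_self_pow₀ hY.le (by omega)
    have h8 : v Y ^ ((e-1) * p^l) < v (X - s * Y) ^ p^l * v Y ^ ((e-1) * p^l) :=
      lt_mul_of_one_lt_left (pow_pos hYpos _) h6
    exact absurd (h7.trans_lt h8) (not_lt.2 h)
  · intro hd
    by_contra! h5
    have h6 : 1 ≤ v (X - s * Y) ^ p^l := one_le_pow₀ h5
    have h8 : v Y ^ ((e-1) * p^l) ≤ v (X - s * Y) ^ p^l * v Y ^ ((e-1) * p^l) :=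
      le_mul_of_one_le_left zero_le h6
    have h9 : v Y ^ ((e-1) * p^l) ≤ v Y ^ 1 := by rw [pow_one]; exact h8.trans h
    have h10 := (pow_le_pow_iff_right₀ hY).1 h9
    obtain ⟨e', rfl⟩ : ∃ e', e = e' + 2 := ⟨e - 2, by omega⟩
    have : e' + 2 - 1 = e' + 1 := by omega
    rw [this] at h10
    nlinarith

lemma sum_rou (hζ : IsPrimitiveRoot ζ e) (he : 2 ≤ e) : ∑ s ∈ nthRootsFinset e (1 : K), s = 0 := by
  classical
  have he0 : 0 < e := by omega
  have hz : ζ ∈ nthRootsFinset e (1 : K) := by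
    rw [mem_nthRootsFinset he0]; exact hζ.pow_eq_one
  have h : ∑ s ∈ nthRootsFinset e (1 : K), ζ * s = ∑ s ∈ nthRootsFinset e (1 : K), s := by
    have hinj : Function.Injective (fun s : K => ζ * s) :=
      mul_right_injective₀ (hζ.ne_zero he0.ne')
    have him : (nthRootsFinset e (1 : K)).image (fun s => ζ * s) = nthRootsFinset e (1 : K) := by
      apply Finset.eq_of_subset_of_card_le
      · intro t ht
        obtain ⟨s, hs, rfl⟩ := Finset.mem_image.1 ht
        rw [mem_nthRootsFinset he0] at *
        rw [mul_pow, hs, hz, one_mul]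
      · rw [Finset.card_image_of_injective _ hinj]
    conv_rhs => rw [← him]
    rw [Finset.sum_image (fun a _ b _ h => hinj h)]
  rw [← Finset.mul_sum] at h
  have h2 : (ζ - 1) * ∑ s ∈ nthRootsFinset e (1 : K), s = 0 := by rw [sub_mul, h]; ring
  rcases mul_eq_zero.1 h2 with h3 | h3
  · exact absurd (sub_eq_zero.1 h3) (hζ.ne_one (by omega))
  · exact h3

/-- The local analysis: either `α^d - β^d` is small or one residue disk is missed. -/
lemma local_analysis (hζ : IsPrimitiveRoot ζ e) (he : 2 ≤ e) (hpe : (e : K) ≠ 0) {α β : K}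
    (hα : 1 < v α) (hne : ∃ lam : K, SPP (p^l*e) lam α ∧ SPP (p^l*e) lam β) :
    Sm v (p^l*e) (α^(p^l*e) - β^(p^l*e)) ∨
    ∃ s0 ∈ nthRootsFinset e (1 : K), ∀ lam : K, SPP (p^l*e) lam α → SPP (p^l*e) lam β →
      v (lam + α^(p^l*e) - s0 * α) = v α := by
  classical
  have hp := (Fact.out : p.Prime)
  have hq : 0 < p^l := pow_pos hp.pos l
  have hd : 2 ≤ p^l * e := by nlinarith
  have he0 : 0 < e := by omega
  have hβ : v β = v α := by
    obtain ⟨lam, h1, h2⟩ := hne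
    exact spp_val v hd hα h1 h2 0
  have hβ1 : 1 < v β := hβ ▸ hα
  set d := p^l*e with hdd
  have hs : ∀ lam : K, ∀ x, SPP d lam α → SPP d lam x → ∃ s ∈ nthRootsFinset e (1 : K),
      Sm v d (lam + x^d - s * x) := by
    intro lam x h1 h2
    have hx : v x = v α := spp_val v hd hα h1 h2 0
    apply lemmaA v hζ he (hx ▸ hα)
    have e1 : lam + x^d = sit d lam x 1 := by rw [sit_succ, sit_zero, add_comm]
    have e2 : (lam + x^d)^d - x^d = sit d lam x 2 - sit d lam x 1 := by
      rw [sit_succ 1, ← e1]; ring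
    rw [← hdd, e2, hx]
    refine (v.map_sub _ _).trans (max_le ?_ ?_) <;> rw [spp_val v hd hα h1 h2]
  obtain ⟨ξ, hξ, hξ1⟩ : ∃ s ∈ nthRootsFinset e (1 : K), Sm v d (α - s * β) := by
    obtain ⟨lam, h1, h2⟩ := hne
    apply lemmaA v hζ he hβ1
    have : α^d - β^d = sit d lam α 1 - sit d lam β 1 := by
      rw [sit_succ, sit_succ, sit_zero, sit_zero]; ring
    rw [← hdd, this, hβ]
    refine (v.map_sub _ _).trans (max_le ?_ ?_)
    · rw [spp_val v hd hα h1 h1]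
    · rw [spp_val v hd hα h1 h2]
  by_cases hit : ∀ s ∈ nthRootsFinset e (1 : K), ∃ lam, SPP d lam α ∧ SPP d lam β ∧
      Sm v d (lam + α^d - s * α)
  · left
    have h1 : ∀ s : K, ∃ s' : K, s ∈ nthRootsFinset e (1 : K) → s' ∈ nthRootsFinset e (1 : K) ∧
        Sm v d (α^d - β^d - (s * ξ - s') * β) := by
      intro s
      by_cases hsm : s ∈ nthRootsFinset e (1 : K)
      · obtain ⟨lam, h1, h2, h3⟩ := hit s hsm
        obtain ⟨s', hs', h4⟩ := hs lam β h1 h2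
        refine ⟨s', fun _ => ⟨hs', ?_⟩⟩
        have : α^d - β^d - (s * ξ - s') * β = (lam + α^d - s * α) + -(lam + β^d - s' * β)
          + s * (α - ξ * β) := by ring
        rw [this]
        exact (h3.add h4.neg).add (hξ1.mul (rou_val p v he0 hsm))
      · exact ⟨0, fun h => absurd h hsm⟩
    choose f hf using h1
    by_cases hz : ∃ s ∈ nthRootsFinset e (1 : K), s * ξ - f s = 0
    · obtain ⟨s, hsm, h0⟩ := hz
      have := (hf s hsm).2
      rwa [h0, zero_mul, sub_zero] at this
    · exfalso
      push Not at hz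
      have h1m : (1 : K) ∈ nthRootsFinset e (1 : K) := by
        rw [mem_nthRootsFinset he0, one_pow]
      set γ := 1 * ξ - f 1 with hγ
      have hγ0 : γ ≠ 0 := hz 1 h1m
      have hξa := rou_alg (p := p) he0 hξ
      have hfeq : ∀ s ∈ nthRootsFinset e (1 : K), f s = s * ξ - γ := by
        intro s hsm
        by_contra hne'
        have ha : IsAlgebraic (ZMod p) ((s * ξ - f s) - γ) :=
          (((rou_alg he0 hsm).mul hξa).sub (rou_alg he0 (hf s hsm).1)).sub
            (((rou_alg he0 h1m).mul hξa).sub (rou_alg he0 (hf 1 h1m).1))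
        have hv := val_const v ha (fun h => hne' (by linear_combination -h))
        have h2 := ((hf s hsm).2.neg.add (hf 1 h1m).2).1
        have : -(α^d - β^d - (s * ξ - f s) * β) + (α^d - β^d - (1 * ξ - f 1) * β)
          = ((s * ξ - f s) - γ) * β := by rw [hγ]; ring
        rw [this, map_mul, hv, one_mul] at h2
        exact absurd hβ1 (not_lt.2 h2)
      have hξ0 : ξ ≠ 0 := by
        rintro rfl
        rw [mem_nthRootsFinset he0, zero_pow he0.ne'] at hξ
        exact zero_ne_one hξ
      have hinj : Set.InjOn f (nthRootsFinset e (1 : K)) := by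
        intro a ha b hb hab
        rw [hfeq a ha, hfeq b hb] at hab
        exact mul_right_cancel₀ hξ0 (sub_left_injective hab)
      have him : (nthRootsFinset e (1 : K)).image f = nthRootsFinset e (1 : K) := by
        apply Finset.eq_of_subset_of_card_le
        · intro t ht
          obtain ⟨s, hs, rfl⟩ := Finset.mem_image.1 ht
          exact (hf s hs).1
        · rw [Finset.card_image_of_injOn hinj]
      have hsum : ∑ s ∈ nthRootsFinset e (1 : K), f s = ∑ s ∈ nthRootsFinset e (1 : K), s := by
        conv_rhs => rw [← him]
        rw [Finset.sum_image hinj]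
      rw [Finset.sum_congr rfl hfeq, Finset.sum_sub_distrib, ← Finset.sum_mul, sum_rou hζ he,
        Finset.sum_const, hζ.card_nthRootsFinset, nsmul_eq_mul, zero_mul, zero_sub, neg_eq_zero] at hsum
      exact (mul_ne_zero hpe hγ0) hsum
  · right
    push Not at hit
    obtain ⟨s0, hs0, h⟩ := hit
    refine ⟨s0, hs0, fun lam h1 h2 => ?_⟩
    obtain ⟨s, hsm, h3⟩ := hs lam α h1 h1
    have : s ≠ s0 := by
      rintro rfl
      exact h lam h1 h2 h3
    exact other_root p v he0 hsm hs0 this (h3.1.trans_lt hα)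

/-- If a disk is missed, there is a monic polynomial that is small on all parameters. -/
lemma missed_poly [IsAlgClosed K] (hζ : IsPrimitiveRoot ζ e) (he : 2 ≤ e) {α s0 : K}
    (hα : 1 < v α) (hs0 : s0 ∈ nthRootsFinset e (1 : K)) :
    ∃ G : K[X], G.Monic ∧ 0 < G.natDegree ∧ ∀ lam : K, SPP (p^l*e) lam α →
      v (lam + α^(p^l*e) - s0 * α) = v α → v (G.eval lam) * v α ≤ 1 := by
  classical
  have hp := (Fact.out : p.Prime)
  have hq : 0 < p^l := pow_pos hp.pos l
  have hd : 2 ≤ p^l * e := by nlinarith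
  have he0 : 0 < e := by omega
  have hs0d : s0^(p^l*e) = 1 := by
    rw [mem_nthRootsFinset he0] at hs0
    rw [mul_comm, pow_mul, hs0, one_pow]
  have hdvd : ∀ A B : K[X], (A - B) * (A - C ζ * B) ∣ A^(p^l*e) - B^(p^l*e) := by
    intro A B
    have hζ' : IsPrimitiveRoot (C ζ) e := hζ.map_of_injective C_injective
    have : A^(p^l*e) - B^(p^l*e) = (A^e - B^e)^(p^l) := by
      rw [sub_pow_char_pow, ← pow_mul, ← pow_mul, mul_comm]
    rw [this]
    refine Dvd.dvd.trans ?_ (dvd_pow_self _ hq.ne')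
    rw [hζ'.pow_sub_pow_eq_prod_sub_mul _ _ he0]
    have h1 : (A - B) * (A - C ζ * B) = ∏ s ∈ ({1, C ζ} : Finset K[X]), (A - s * B) := by
      rw [Finset.prod_pair (hζ'.ne_one (by omega)).symm, one_mul]
    rw [h1]
    apply Finset.prod_dvd_prod_of_subset
    intro t ht
    rw [Finset.mem_insert, Finset.mem_singleton] at ht
    rw [mem_nthRootsFinset he0]
    rcases ht with rfl | rfl
    · simp
    · exact hζ'.pow_eq_one
  set d := p^l*e with hdd
  set ls := s0 * α - α^d with hls
  have hx1 : sit d ls α 1 = s0 * α := by rw [sit_succ, sit_zero, hls]; ring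
  have hx2 : sit d ls α 2 = s0 * α := by
    rw [sit_succ, hx1, mul_pow, hs0d, hls]; ring
  obtain ⟨m1, n1⟩ := sP_monic_deg (x := α) hd 0
  obtain ⟨m2, n2⟩ := sP_monic_deg (x := α) hd 1
  obtain ⟨m3, n3⟩ := sP_monic_deg (x := α) hd 2
  simp only [zero_add, Nat.reduceAdd, pow_zero, pow_one] at m1 n1 m2 n2 m3 n3
  set x1 := sP d α 1
  set x2 := sP d α 2 with hx2'
  set x3 := sP d α 3 with hx3'
  have hzα : ζ - 1 ≠ 0 := sub_ne_zero.2 (hζ.ne_one (by omega))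
  have hv0 : v ls ≤ v ls := le_rfl
  have hζm : ζ ∈ nthRootsFinset e (1 : K) := by
    rw [mem_nthRootsFinset he0]; exact hζ.pow_eq_one
  have h1m : (1 : K) ∈ nthRootsFinset e (1 : K) := by
    rw [mem_nthRootsFinset he0, one_pow]
  have hvs0 := rou_val p v he0 hs0
  -- the second root
  have hdeg : (C ζ * x1).degree < x2.degree := by
    rw [degree_C_mul (hζ.ne_zero he0.ne')]
    apply degree_lt_degree
    rw [n1, n2]; omega
  have hFm : (x2 - C ζ * x1).Monic := m2.sub_of_left hdeg
  have hFd : (x2 - C ζ * x1).natDegree = d := by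
    rw [natDegree_sub_eq_left_of_natDegree_lt, n2]
    rw [natDegree_C_mul (hζ.ne_zero he0.ne'), n1, n2]; omega
  obtain ⟨r2, hr2, hr2v⟩ : ∃ r ∈ (x2 - C ζ * x1).roots, v (ls - r) < v α := by
    by_contra! hall
    have hsp : (x2 - C ζ * x1).Splits := IsAlgClosed.splits _
    have hev := hsp.eval_eq_prod_roots_of_monic hFm ls
    have hcard := hsp.natDegree_eq_card_roots
    have h1 : v ((x2 - C ζ * x1).eval ls) = v α := by
      rw [eval_sub, eval_mul, eval_C, sP_eval, sP_eval, hx1, hx2]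
      have : s0 * α - ζ * (s0 * α) = (1 - ζ) * s0 * α := by ring
      rw [this, map_mul, map_mul, hvs0,
        rou_sub_val p v he0 h1m hζm (hζ.ne_one (by omega)).symm]
      simp
    rw [hev, map_multiset_prod, Multiset.map_map] at h1
    have h2 : v α ^ d ≤ (((x2 - C ζ * x1).roots).map (v ∘ fun x => ls - x)).prod := by
      rw [← hFd, hcard]
      generalize (x2 - C ζ * x1).roots = M at hall
      induction M using Multiset.induction_on with
      | empty => simp
      | cons a M ih =>
        rw [Multiset.card_cons, pow_succ', Multiset.map_cons, Multiset.prod_cons]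
        exact mul_le_mul' (hall a (Multiset.mem_cons_self _ _))
          (ih (fun r hr => hall r (Multiset.mem_cons_of_mem hr)))
    rw [h1] at h2
    have h3 : v α ^ d ≤ v α ^ 1 := by rwa [pow_one]
    have := (pow_le_pow_iff_right₀ hα).1 h3
    omega
  have hW : x3 - x2 = x2^d - x1^d := by
    change (x2^d + X) - (x1^d + X) = _
    ring
  have hr1 : (X - C ls) ∣ x2 - x1 := by
    rw [dvd_iff_isRoot, IsRoot, eval_sub, sP_eval, sP_eval, hx1, hx2, sub_self]
  have hr2' : (X - C r2) ∣ x2 - C ζ * x1 := dvd_iff_isRoot.2 (isRoot_of_mem_roots hr2)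
  obtain ⟨G, hG⟩ : (X - C ls) * (X - C r2) ∣ x3 - x2 := by
    rw [hW]; exact (mul_dvd_mul hr1 hr2').trans (hdvd x2 x1)
  have hWd : x2.degree < x3.degree := by
    apply degree_lt_degree
    rw [n2, n3]; nlinarith
  have hWm : (x3 - x2).Monic := m3.sub_of_left hWd
  have hWn : (x3 - x2).natDegree = d^2 := by
    rw [natDegree_sub_eq_left_of_natDegree_lt, n3]
    rw [n2, n3]; nlinarith
  have hHm : ((X - C ls) * (X - C r2)).Monic := (monic_X_sub_C _).mul (monic_X_sub_C _)
  have hGm : G.Monic := hHm.of_mul_monic_left (hG ▸ hWm)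
  refine ⟨G, hGm, ?_, ?_⟩
  · have := hHm.natDegree_mul hGm
    rw [← hG, hWn, (monic_X_sub_C ls).natDegree_mul (monic_X_sub_C r2), natDegree_X_sub_C,
      natDegree_X_sub_C] at this
    nlinarith
  · intro lam h1 h2
    have e1 : lam + α^d - s0 * α = lam - ls := by rw [hls]; ring
    rw [e1] at h2
    have h3 : v (lam - r2) = v α := by
      have : lam - r2 = (lam - ls) + (ls - r2) := by ring
      rw [this, Valuation.map_add_eq_of_lt_left _ (by rw [h2]; exact hr2v), h2]
    have h4 : v ((x3 - x2).eval lam) ≤ v α := by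
      rw [eval_sub, sP_eval, sP_eval]
      refine (v.map_sub _ _).trans (max_le ?_ ?_) <;> rw [spp_val v hd hα h1 h1]
    rw [hG] at h4
    simp only [eval_mul, eval_sub, eval_X, eval_C, map_mul, h2, h3] at h4
    have hpos : 0 < v α := zero_lt_one.trans hα
    have : v α * (v (G.eval lam) * v α) ≤ v α * 1 := by
      rw [mul_one, mul_left_comm, mul_comm]; exact h4
    exact le_of_mul_le_mul_left this hpos

end rou


section vander
variable {K : Type*} [Field K]
variable {Γ₀ : Type*} [LinearOrderedCommGroupWithZero Γ₀] (v : Valuation K Γ₀)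

lemma val_det_le {n : ℕ} (M : Matrix (Fin n) (Fin n) K) (b : Fin n → Γ₀)
    (h : ∀ i j, v (M i j) ≤ b j) : v M.det ≤ ∏ j, b j := by
  rw [Matrix.det_apply]
  apply v.map_sum_le
  intro σ _
  have : v (Equiv.Perm.sign σ • ∏ i, M (σ i) i) = v (∏ i, M (σ i) i) := by
    rcases Int.units_eq_one_or (Equiv.Perm.sign σ) with h | h <;> rw [h] <;> simp
  rw [this, map_prod]
  exact Finset.prod_le_prod (fun _ _ => zero_le) (fun i _ => h _ _)

lemma val_offDiag_fin {n : ℕ} (w : Fin n → K) :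
    v (∏ x ∈ (Finset.univ : Finset (Fin n)).offDiag, (w x.1 - w x.2)) =
      v ((Matrix.vandermonde w).det) ^ 2 := by
  have h1 : v ((Matrix.vandermonde w).det) =
      ∏ x ∈ (Finset.univ : Finset (Fin n × Fin n)).filter (fun x => x.1 < x.2), v (w x.1 - w x.2) := by
    rw [Matrix.det_vandermonde, map_prod, Finset.prod_filter, Fintype.prod_prod_type]
    apply Finset.prod_congr rfl
    intro i _
    rw [map_prod, ← Finset.prod_filter]
    apply Finset.prod_congr
    · ext; simp
    · intro j _; rw [Valuation.map_sub_swap]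
  have h2 : v ((Matrix.vandermonde w).det) =
      ∏ x ∈ (Finset.univ : Finset (Fin n × Fin n)).filter (fun x => x.2 < x.1), v (w x.1 - w x.2) := by
    rw [h1]
    refine Finset.prod_bij (fun x _ => (x.2, x.1)) ?_ ?_ ?_ ?_
    · intro a ha; simpa using ha
    · rintro ⟨a, b⟩ _ ⟨c, d⟩ _ h; simp at h ⊢; tauto
    · rintro ⟨a, b⟩ h; exact ⟨(b, a), by simpa using h, rfl⟩
    · intro a _; exact Valuation.map_sub_swap _ _ _
  rw [sq]
  conv_rhs => 
    arg 1
    rw [h1]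
  rw [h2, ← Finset.prod_union, map_prod]
  · apply Finset.prod_congr _ (fun _ _ => rfl)
    ext x
    simp
  · rw [Finset.disjoint_filter]
    intro x _ h; exact h.le.not_gt

/-- Fekete-type bound. -/
lemma vander_bound [DecidableEq K] (S : Finset K) (G T : K[X]) (hG : G.Monic) (hT : T.Monic)
    (hT1 : T.natDegree = 1)
    (g r : Γ₀) (hg : ∀ a ∈ S, v (G.eval a) ≤ g) (hr : ∀ a ∈ S, v (T.eval a) ≤ r) :
    v (∏ x ∈ S.offDiag, (x.1 - x.2)) ≤
      (g ^ (∑ k ∈ Finset.range S.card, k / G.natDegree) *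
        r ^ (∑ k ∈ Finset.range S.card, k % G.natDegree)) ^ 2 := by
  set n := S.card with hn
  set D := G.natDegree
  let E := S.equivFin
  let w : Fin n → K := fun i => (E.symm i : K)
  have hw : ∀ i, w i ∈ S := fun i => (E.symm i).2
  have hwi : Function.Injective w := Subtype.val_injective.comp E.symm.injective
  have h1 : ∏ x ∈ S.offDiag, (x.1 - x.2) =
      ∏ x ∈ (Finset.univ : Finset (Fin n)).offDiag, (w x.1 - w x.2) := by
    symm
    refine Finset.prod_bij (fun x _ => (w x.1, w x.2)) ?_ ?_ ?_ ?_
    · intro x hx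
      rw [Finset.mem_offDiag] at hx ⊢
      exact ⟨hw _, hw _, fun h => hx.2.2 (hwi h)⟩
    · rintro ⟨a, b⟩ _ ⟨c, d⟩ _ h
      simp only [Prod.mk.injEq] at h ⊢
      exact ⟨hwi h.1, hwi h.2⟩
    · rintro ⟨a, b⟩ h
      rw [Finset.mem_offDiag] at h
      refine ⟨(E ⟨a, h.1⟩, E ⟨b, h.2.1⟩), ?_, ?_⟩
      · rw [Finset.mem_offDiag]
        refine ⟨Finset.mem_univ _, Finset.mem_univ _, fun h' => h.2.2 ?_⟩
        simpa using h'
      · simp [w]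
    · intros; rfl
  rw [h1, val_offDiag_fin]
  apply pow_le_pow_left₀ zero_le
  let P : Fin n → K[X] := fun j => G ^ ((j : ℕ) / D) * T ^ ((j : ℕ) % D)
  have hPm : ∀ j, (P j).Monic := fun j => (hG.pow _).mul (hT.pow _)
  have hPd : ∀ j, (P j).natDegree = j := by
    intro j
    rw [(hG.pow _).natDegree_mul (hT.pow _), hG.natDegree_pow, hT.natDegree_pow, hT1, mul_one,
      mul_comm]
    exact Nat.div_add_mod _ _
  rw [Matrix.det_eval_matrixOfPolynomials_eq_det_vandermonde w P hPd hPm]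
  refine (val_det_le v _ (fun j => g ^ ((j : ℕ) / D) * r ^ ((j : ℕ) % D)) ?_).trans ?_
  · intro i j
    simp only [Matrix.of_apply, P, eval_mul, eval_pow, map_mul, map_pow]
    exact mul_le_mul' (pow_le_pow_left₀ zero_le (hg _ (hw i)) _)
      (pow_le_pow_left₀ zero_le (hr _ (hw i)) _)
  · rw [Finset.prod_mul_distrib, Finset.prod_pow_eq_pow_sum, Finset.prod_pow_eq_pow_sum,
      Finset.sum_range, Finset.sum_range]

end vander

lemma numeric (m D' d : ℕ) (hD' : 0 < D') (hd : 2 ≤ d) : ∃ n N0 : ℕ, ∀ N, N0 ≤ N →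
    m * ((∑ k ∈ Finset.range N, k / d^n) + ∑ k ∈ Finset.range N, k % d^n)
      + ∑ k ∈ Finset.range N, k % D' < ∑ k ∈ Finset.range N, k / D' := by
  obtain ⟨n, hn⟩ : ∃ n, 2 * m * D' < d^n := 
    ⟨_, Nat.lt_pow_self (by omega : 1 < d)⟩
  set D := d^n
  have hD : 0 < D := by omega
  -- N large
  refine ⟨n, 4 * (m * D * D * D' + D' * D' * D + D' * D) + 2, fun N hN => ?_⟩
  set A1 := ∑ k ∈ Finset.range N, k / D
  set A2 := ∑ k ∈ Finset.range N, k % D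
  set B1 := ∑ k ∈ Finset.range N, k / D'
  set B2 := ∑ k ∈ Finset.range N, k % D'
  set T := ∑ k ∈ Finset.range N, k with hT
  have e1 : D * A1 + A2 = T := by
    rw [hT, Finset.mul_sum, ← Finset.sum_add_distrib]
    exact Finset.sum_congr rfl (fun k _ => Nat.div_add_mod k D)
  have e2 : D' * B1 + B2 = T := by
    rw [hT, Finset.mul_sum, ← Finset.sum_add_distrib]
    exact Finset.sum_congr rfl (fun k _ => Nat.div_add_mod k D')
  have e3 : A2 ≤ N * D := by
    have := Finset.sum_le_card_nsmul (Finset.range N) (fun k => k % D) D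
      (fun k _ => (Nat.mod_lt k hD).le)
    simpa using this
  have e4 : B2 ≤ N * D' := by
    have := Finset.sum_le_card_nsmul (Finset.range N) (fun k => k % D') D'
      (fun k _ => (Nat.mod_lt k hD').le)
    simpa using this
  have e5 : 2 * T + N = N * N := by
    have := Finset.sum_range_id_mul_two N
    rw [← hT] at this
    obtain ⟨N', rfl⟩ : ∃ N', N = N' + 1 := ⟨N - 1, by omega⟩
    simp at this
    nlinarith
  by_contra! hcon
  have f1 : D * D' * B1 ≤ D * D' * (m * (A1 + A2) + B2) := Nat.mul_le_mul_left _ hcon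
  have f2 : D * T ≤ m * D' * T + m * D * D' * (N * D) + D * D' * (N * D') + D * (N * D') := by
    have g1 : D * T = D * D' * B1 + D * B2 := by rw [← e2]; ring
    have g2 : m * D' * (D * A1) ≤ m * D' * T := Nat.mul_le_mul_left _ (by omega)
    have g3 : m * D * D' * A2 ≤ m * D * D' * (N * D) := Nat.mul_le_mul_left _ e3
    have g4 : D * D' * B2 ≤ D * D' * (N * D') := Nat.mul_le_mul_left _ e4
    have g5 : D * B2 ≤ D * (N * D') := Nat.mul_le_mul_left _ e4
    have g6 : D * D' * (m * (A1 + A2) + B2) = m * D' * (D * A1) + m * D * D' * A2 + D * D' * B2 := by ring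
    omega
  have f3 : 2 * m * D' * T ≤ D * T := Nat.mul_le_mul_right _ hn.le
  have f4 : D * T ≤ 2 * N * (m * D * D * D' + D' * D' * D + D' * D) := by nlinarith
  set C := m * D * D * D' + D' * D' * D + D' * D
  have f5 : T ≤ D * T := Nat.le_mul_of_pos_left _ hD
  have f6 : N * N ≤ N * (4 * C + 1) := by nlinarith
  have : N ≤ 4 * C + 1 := Nat.le_of_mul_le_mul_left f6 (by omega)
  omega

section galois
variable {p : ℕ} [Fact p.Prime] {F Ω : Type*} [Field F] [Algebra (ZMod p)[X] F]
  [IsFractionRing (ZMod p)[X] F] [Field Ω] [Algebra (ZMod p)[X] Ω] [Algebra F Ω]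
  [IsScalarTower (ZMod p)[X] F Ω] [Normal F Ω]
variable {Γ₀ : Type*} [LinearOrderedCommGroupWithZero Γ₀] (v : Valuation Ω Γ₀)

lemma val_poly_ge (hα : 1 < v (algebraMap (ZMod p)[X] Ω X)) (P : (ZMod p)[X]) (hP : P ≠ 0) :
    1 ≤ v (algebraMap (ZMod p)[X] Ω P) := by
  set φ := algebraMap (ZMod p)[X] Ω with hφ
  have hc : ∀ c : ZMod p, c ≠ 0 → v (φ (C c)) = 1 := by
    intro c hc
    have h1 : (φ (C c))^(p-1) = 1 := by
      rw [← map_pow, ← C_pow, ZMod.pow_card_sub_one_eq_one hc, C_1, map_one]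
    have h2 : (v (φ (C c)))^(p-1) = 1 := by rw [← map_pow, h1, map_one]
    have := (Fact.out : p.Prime).two_le
    exact (pow_eq_one_iff_of_nonneg zero_le (by omega)).1 h2
  have key : ∀ P : (ZMod p)[X], P ≠ 0 → 1 ≤ v (φ P) ∧ (P.coeff 0 = 0 → 1 < v (φ P)) := by
    intro P
    induction P using Polynomial.recOnHorner with
    | M0 => intro h; exact absurd rfl h
    | MC q a hq ha ih =>
      intro _
      refine ⟨?_, fun h => absurd (by simpa [hq] using h) ha⟩
      by_cases hq0 : q = 0
      · rw [hq0, zero_add, hc a ha]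
      · have h1 := (ih hq0).2 hq
        rw [map_add, Valuation.map_add_eq_of_lt_left _ (by rw [hc a ha]; exact h1)]
        exact h1.le
    | MX q hq0 ih =>
      intro _
      have h1 := (ih hq0).1
      have h2 : 1 < v (φ (q * X)) := by
        rw [map_mul, map_mul]
        exact lt_of_lt_of_le hα (le_mul_of_one_le_left' h1)
      exact ⟨h2.le, fun _ => h2⟩
  exact (key P hP).1

lemma val_fixed_ge (hα : 1 < v (algebraMap (ZMod p)[X] Ω X)) (z : Ω) (hz : z ≠ 0)
    (hi : IsIntegral (ZMod p)[X] z) (hfix : ∀ σ : Ω ≃ₐ[F] Ω, σ z = z) : 1 ≤ v z := by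
  have hm : minpoly F z = (minpoly (ZMod p)[X] z).map (algebraMap (ZMod p)[X] F) :=
    minpoly.isIntegrallyClosed_eq_field_fractions' F hi
  have hzF : IsIntegral F z := hi.tower_top
  have hsp : ((minpoly F z).map (algebraMap F Ω)).Splits := Normal.splits inferInstance z
  have hroots : ∀ r ∈ ((minpoly F z).map (algebraMap F Ω)).roots, r = z := by
    intro r hr
    have := isRoot_of_mem_roots hr
    rw [IsRoot, eval_map_algebraMap] at this
    obtain ⟨σ, hσ⟩ := minpoly.exists_algEquiv_of_root' hzF.isAlgebraic this
    rw [← hσ, hfix]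
  have hmon : ((minpoly F z).map (algebraMap F Ω)).Monic := (minpoly.monic hzF).map _
  have h0 := hsp.eval_eq_prod_roots_of_monic hmon 0
  rw [Multiset.eq_replicate_card.2 hroots, Multiset.map_replicate, Multiset.prod_replicate] at h0
  set n := Multiset.card ((minpoly F z).map (algebraMap F Ω)).roots
  have hn : n ≠ 0 := by
    have h1 := hsp.natDegree_eq_card_roots
    rw [natDegree_map] at h1
    have h2 := minpoly.natDegree_pos hzF
    omega
  have h3 : eval 0 ((minpoly F z).map (algebraMap F Ω)) =
      algebraMap (ZMod p)[X] Ω ((minpoly (ZMod p)[X] z).coeff 0) := by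
    rw [hm, Polynomial.map_map, ← IsScalarTower.algebraMap_eq, ← coeff_zero_eq_eval_zero, coeff_map]
  rw [h3] at h0
  have h4 : v ((0 - z)^n) = v z ^ n := by simp
  have hne : (minpoly (ZMod p)[X] z).coeff 0 ≠ 0 := by
    intro h
    rw [h, map_zero] at h0
    exact hz (by simpa [hn] using h0.symm)
  have h5 := val_poly_ge v hα _ hne
  rw [h0, h4] at h5
  by_contra! h6
  exact absurd (pow_lt_one₀ zero_le h6 hn) (not_lt.2 h5)

end galois


lemma mem_integral_of_val {A K : Type*} [CommRing A] [Field K] [Algebra A K] {z : K}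
    (h : ∀ V : ValuationSubring K, (∀ a : K, IsIntegral A a → V.valuation a ≤ 1) → V.valuation z ≤ 1) :
    IsIntegral A z := by
  by_contra hz
  have hz' : z ∉ (integralClosure A K).toSubring := fun h => hz h
  have : IsIntegrallyClosedIn (integralClosure A K).toSubring K :=
    inferInstanceAs (IsIntegrallyClosedIn (integralClosure A K) K)
  obtain ⟨V, hV1, hV⟩ := Subring.exists_le_valuationSubring_of_isIntegrallyClosedIn hz'
  apply hV
  rw [← V.valuation_le_one_iff]
  exact h V (fun a ha => (V.valuation_le_one_iff a).2 (hV1 ha))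

lemma integral_lam {A K : Type*} [CommRing A] [Field K] [Algebra A K] {d : ℕ} (hd : 2 ≤ d)
    {lam x : K} (hx : IsIntegral A x) (h : SPP d lam x) : IsIntegral A lam :=
  mem_integral_of_val fun V hV => spp_lam_small V.valuation hd (hV x hx) h

lemma integral_other {A K : Type*} [CommRing A] [Field K] [Algebra A K] {d : ℕ} (hd : 2 ≤ d)
    {lam x y : K} (hx : IsIntegral A x) (h : SPP d lam x) (hy : SPP d lam y) : IsIntegral A y :=
  mem_integral_of_val fun V hV => spp_val_small V.valuation hd (hV x hx) h hy 0

section DL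
/-- the discriminant-type product -/
noncomputable def dZ {Ω : Type*} [Field Ω] (O : Finset Ω) : Ω := by
  classical exact ∏ x ∈ O.offDiag, (x.1 - x.2)

lemma dZ_image {F Ω : Type*} [Field F] [Field Ω] [Algebra F Ω] [DecidableEq Ω] (O : Finset Ω) (σ : Ω ≃ₐ[F] Ω) : dZ (O.image σ) = σ (dZ O) := by
  classical
  unfold dZ
  rw [map_prod]
  symm
  refine Finset.prod_bij (fun x _ => (σ x.1, σ x.2)) ?_ ?_ ?_ ?_
  · intro x hx
    simp only [Finset.mem_offDiag, Finset.mem_image] at hx ⊢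
    exact ⟨⟨_, hx.1, rfl⟩, ⟨_, hx.2.1, rfl⟩, fun h => hx.2.2 (σ.injective h)⟩
  · rintro ⟨a, b⟩ _ ⟨c, d⟩ _ h
    simp only [Prod.mk.injEq] at h ⊢
    exact ⟨σ.injective h.1, σ.injective h.2⟩
  · rintro ⟨a, b⟩ h
    simp only [Finset.mem_offDiag, Finset.mem_image] at h
    obtain ⟨⟨x, hx, rfl⟩, ⟨y, hy, rfl⟩, hne⟩ := h
    exact ⟨(x, y), by simp only [Finset.mem_offDiag]; exact ⟨hx, hy, fun h => hne (by rw [h])⟩, rfl⟩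
  · intro x _; simp

lemma DL_core {p : ℕ} [Fact p.Prime] (F : Type*) {Ω : Type*} [Field F] [Algebra (ZMod p)[X] F]
    [IsFractionRing (ZMod p)[X] F] [Field Ω] [Algebra (ZMod p)[X] Ω] [Algebra F Ω]
    [IsScalarTower (ZMod p)[X] F Ω] [Normal F Ω]
    {Γ₀ : Type*} [LinearOrderedCommGroupWithZero Γ₀] (v : Valuation Ω Γ₀)
    {d : ℕ} (hd : 2 ≤ d) {α β : Ω} (hαX : α = algebraMap (ZMod p)[X] Ω X)
    (hα : 1 < v α) (hS : {lam : Ω | SPP d lam α ∧ SPP d lam β}.Infinite)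
    (G : Polynomial Ω) (hGm : G.Monic) (hGd : 0 < G.natDegree)
    (hG : ∀ lam : Ω, SPP d lam α → SPP d lam β → v (G.eval lam) * v α ≤ 1) : False := by
  classical
  have hαi : IsIntegral (ZMod p)[X] α := hαX ▸ isIntegral_algebraMap
  have hfixα : ∀ σ : Ω ≃ₐ[F] Ω, σ α = α := by
    intro σ
    rw [hαX, IsScalarTower.algebraMap_apply (ZMod p)[X] F Ω, σ.commutes]
  have hβi : IsIntegral (ZMod p)[X] β := by
    obtain ⟨lam, h1, h2⟩ := hS.nonempty
    exact integral_other hd hαi h1 h2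
  have hβF : IsIntegral F β := hβi.tower_top
  let E : Finset Ω := ((minpoly F β).aroots Ω).toFinset
  have hE : ∀ b, b ∈ E ↔ aeval b (minpoly F β) = 0 := by
    intro b
    simp only [E, Multiset.mem_toFinset, mem_aroots]
    exact ⟨fun h => h.2, fun h => ⟨minpoly.ne_zero hβF, h⟩⟩
  have hE' : ∀ b ∈ E, ∃ σ : Ω ≃ₐ[F] Ω, σ β = b := fun b hb =>
    minpoly.exists_algEquiv_of_root' hβF.isAlgebraic ((hE b).1 hb)
  have hβE : β ∈ E := (hE β).2 (minpoly.aeval _ _)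
  have hEσ : ∀ (σ : Ω ≃ₐ[F] Ω) b, b ∈ E → σ b ∈ E := by
    intro σ b hb
    rw [hE] at hb ⊢
    rw [aeval_algHom_apply, hb, map_zero]
  obtain ⟨n, N0, hN⟩ := numeric E.card G.natDegree d hGd hd
  obtain ⟨Λ, hΛS, hΛc⟩ := hS.exists_subset_card_eq N0
  let Os : Ω → Set Ω := fun b => {z | ∃ σ : Ω ≃ₐ[F] Ω, ∃ l ∈ Λ, σ β = b ∧ σ l = z}
  have hfin : ∀ b, (Os b).Finite := by
    intro b
    apply Set.Finite.subset (Λ.finite_toSet.biUnion (fun l _ => ((minpoly F l).rootSet Ω).toFinite))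
    rintro z ⟨σ, l, hl, -, rfl⟩
    simp only [Set.mem_iUnion]
    refine ⟨l, hl, ?_⟩
    have hlF : IsIntegral F l := (integral_lam hd hαi (hΛS hl).1).tower_top
    rw [mem_rootSet]
    exact ⟨minpoly.ne_zero hlF, by rw [aeval_algHom_apply, minpoly.aeval, map_zero]⟩
  let O : Ω → Finset Ω := fun b => (hfin b).toFinset
  have hO : ∀ b z, z ∈ O b ↔ ∃ σ : Ω ≃ₐ[F] Ω, ∃ l ∈ Λ, σ β = b ∧ σ l = z := by
    intro b z; simp only [O, Set.Finite.mem_toFinset]; rfl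
  have hOσ : ∀ (σ : Ω ≃ₐ[F] Ω) b, O (σ b) = (O b).image σ := by
    intro σ b
    ext z
    rw [hO, Finset.mem_image]
    constructor
    · rintro ⟨τ, l, hl, h1, h2⟩
      refine ⟨σ.symm z, (hO _ _).2 ⟨τ.trans σ.symm, l, hl, by simp [h1], by simp [h2]⟩, by simp⟩
    · rintro ⟨w, hw, rfl⟩
      obtain ⟨τ, l, hl, h1, h2⟩ := (hO _ _).1 hw
      exact ⟨τ.trans σ, l, hl, by simp [h1], by simp [h2]⟩
  have hOspp : ∀ b z, z ∈ O b → SPP d z α ∧ SPP d z b := by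
    intro b z hz
    obtain ⟨σ, l, hl, h1, h2⟩ := (hO _ _).1 hz
    have a1 := (spp_map (σ : Ω →+* Ω)).2 (hΛS hl).1
    have a2 := (spp_map (σ : Ω →+* Ω)).2 (hΛS hl).2
    simp only [RingHom.coe_coe, h1, h2, hfixα] at a1 a2
    exact ⟨a1, a2⟩
  have hcard : ∀ b ∈ E, (O b).card = (O β).card := by
    intro b hb
    obtain ⟨σ, rfl⟩ := hE' b hb
    rw [hOσ, Finset.card_image_of_injective _ σ.injective]
  have hcardβ : N0 ≤ (O β).card := by
    rw [← hΛc]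
    apply Finset.card_le_card
    intro l hl
    exact (hO _ _).2 ⟨AlgEquiv.refl, l, hl, rfl, rfl⟩
  have hnum := hN _ hcardβ
  set N := (O β).card
  set A1 := ∑ k ∈ Finset.range N, k / d^n
  set A2 := ∑ k ∈ Finset.range N, k % d^n
  set B1 := ∑ k ∈ Finset.range N, k / G.natDegree
  set B2 := ∑ k ∈ Finset.range N, k % G.natDegree
  set R := v α with hR
  have hR0 : R ≠ 0 := (zero_lt_one.trans hα).ne'
  let Z := ∏ b ∈ E, dZ (O b)
  have hZσ : ∀ σ : Ω ≃ₐ[F] Ω, σ Z = Z := by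
    intro σ
    simp only [Z, map_prod]
    refine Finset.prod_bij (fun b _ => σ b) (fun b hb => hEσ σ b hb)
      (fun a _ b _ h => σ.injective h) (fun b hb => ⟨σ.symm b, hEσ σ.symm b hb, by simp⟩) ?_
    intro b _
    rw [hOσ, dZ_image]
  have hZ0 : Z ≠ 0 := by
    apply Finset.prod_ne_zero_iff.2
    intro b _
    unfold dZ
    apply Finset.prod_ne_zero_iff.2
    intro x hx
    exact sub_ne_zero.2 (Finset.mem_offDiag.1 hx).2.2
  have hZi : IsIntegral (ZMod p)[X] Z := by
    apply IsIntegral.prod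
    intro b _
    unfold dZ
    apply IsIntegral.prod
    intro x hx
    rw [Finset.mem_offDiag] at hx
    exact (integral_lam hd hαi (hOspp _ _ hx.1).1).sub (integral_lam hd hαi (hOspp _ _ hx.2.1).1)
  have hZ1 : 1 ≤ v Z := val_fixed_ge (F := F) v (hαX ▸ hα) Z hZ0 hZi hZσ
  have hT : (sP d α 1).Monic ∧ (sP d α 1).natDegree = 1 := by
    simpa using sP_monic_deg (x := α) hd 0
  have hP := sP_monic_deg (x := α) hd n
  have bd1 : ∀ b ∈ E, v (dZ (O b)) ≤ (R^(A1+A2))^2 := by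
    intro b hb
    have := vander_bound v (O b) (sP d α (n+1)) (sP d α 1) hP.1 hT.1 hT.2 R R
      (fun a ha => by rw [sP_eval, spp_val v hd hα (hOspp _ _ ha).1 (hOspp _ _ ha).1])
      (fun a ha => by rw [sP_eval, spp_val v hd hα (hOspp _ _ ha).1 (hOspp _ _ ha).1])
    rw [hP.2, hcard b hb, ← pow_add] at this
    exact this
  have bd2 : v (dZ (O β)) ≤ (R⁻¹^B1 * R^B2)^2 := by
    have := vander_bound v (O β) G (sP d α 1) hGm hT.1 hT.2 R⁻¹ R
      (fun a ha => by
        have h1 := mul_le_mul' (hG a (hOspp _ _ ha).1 (hOspp _ _ ha).2) (le_refl R⁻¹)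
        rwa [mul_assoc, mul_inv_cancel₀ hR0, mul_one, one_mul] at h1)
      (fun a ha => by rw [sP_eval, spp_val v hd hα (hOspp _ _ ha).1 (hOspp _ _ ha).1])
    exact this
  have hR1 : 1 ≤ (R^(A1+A2))^2 := one_le_pow₀ (one_le_pow₀ hα.le)
  have bd3 : v (∏ b ∈ E.erase β, dZ (O b)) ≤ ((R^(A1+A2))^2)^E.card := by
    rw [map_prod]
    refine (Finset.prod_le_prod (fun _ _ => zero_le)
      (fun b hb => bd1 b (Finset.mem_of_mem_erase hb))).trans ?_
    rw [Finset.prod_const]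
    exact pow_le_pow_right₀ hR1 (Finset.card_le_card (Finset.erase_subset _ _))
  have hZ2 : v Z ≤ (R⁻¹^B1 * R^B2)^2 * ((R^(A1+A2))^2)^E.card := by
    simp only [Z]
    rw [← Finset.mul_prod_erase _ _ hβE, map_mul]
    exact mul_le_mul' bd2 bd3
  have h3 := hZ1.trans hZ2
  have h4 : R^(2*B1) * ((R⁻¹^B1 * R^B2)^2 * ((R^(A1+A2))^2)^E.card) =
      R^(2 * (E.card * (A1+A2) + B2)) := by
    have : R^B1 * R⁻¹^B1 = 1 := by rw [← mul_pow, mul_inv_cancel₀ hR0, one_pow]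
    calc _ = (R^B1 * R⁻¹^B1)^2 * (R^B2)^2 * ((R^(A1+A2))^2)^E.card := by
          rw [mul_pow, mul_pow, mul_comm 2 B1, pow_mul]; simp only [mul_assoc]
      _ = _ := by
          rw [this, one_pow, one_mul, ← pow_mul, ← pow_mul, ← pow_mul, ← pow_add]
          congr 1; ring
  have h5 : R^(2*B1) ≤ R^(2 * (E.card * (A1+A2) + B2)) := by
    rw [← h4]
    exact le_mul_of_one_le_right' h3
  exact absurd (pow_lt_pow_right₀ hα (by omega : 2 * (E.card * (A1+A2) + B2) < 2 * B1)) (not_lt.2 h5)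

end DL


section two
variable {K : Type*} [Field K]

lemma fin_kappa (h2 : (2 : K) ≠ 0) (α β a : K) {n : ℕ} (hn : 1 ≤ n) :
    {lam : K | sit 2 lam α (n+1) + sit 2 lam β (n+1) = a}.Finite := by
  classical
  let P : K[X] := sP 2 α (n+1) + sP 2 β (n+1) - C a
  have hP : P ≠ 0 := by
    intro h
    have h1 := congrArg (fun q => q.coeff (2^n)) h
    have ha := sP_monic_deg (d := 2) (x := α) le_rfl n
    have hb := sP_monic_deg (d := 2) (x := β) le_rfl n
    have h3 : (sP 2 α (n+1)).coeff (2^n) = 1 := by rw [← ha.2]; exact ha.1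
    have h4 : (sP 2 β (n+1)).coeff (2^n) = 1 := by rw [← hb.2]; exact hb.1
    simp only [P, coeff_sub, coeff_add, h3, h4, coeff_C, coeff_zero] at h1
    rw [if_neg (by positivity)] at h1
    apply h2
    linear_combination h1
  apply (P.roots.toFinset.finite_toSet).subset
  intro lam hl
  simp only [Set.mem_setOf_eq] at hl
  simp only [Finset.mem_coe, Multiset.mem_toFinset, mem_roots hP, IsRoot, P, eval_sub, eval_add, sP_eval, eval_C, hl,
    sub_self]

variable {p : ℕ} [Fact p.Prime] [Algebra (ZMod p) K]

lemma two_step {α β lam : K} (h1 : SPP 2 lam α) (h2 : SPP 2 lam β) (n : ℕ)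
    (h : ∀ V : ValuationSubring K, 1 < V.valuation α →
      V.valuation (sit 2 lam α n - sit 2 lam β n) = V.valuation α) :
    IsAlgebraic (ZMod p) (sit 2 lam α n + sit 2 lam β n) := by
  apply isAlgebraic_of_val
  intro V
  rcases le_or_gt (V.valuation α) 1 with hα | hα
  · exact (Valuation.map_add_le _ (spp_val_small _ le_rfl hα h1 h1 n) (spp_val_small _ le_rfl hα h1 h2 n))
  · have a1 := spp_val _ le_rfl hα h1 h1 (n+1)
    have a2 := spp_val _ le_rfl hα h1 h2 (n+1)
    have a3 : V.valuation (sit 2 lam α (n+1) - sit 2 lam β (n+1)) ≤ V.valuation α :=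
      Valuation.map_sub_le _ a1.le a2.le
    have a4 : sit 2 lam α (n+1) - sit 2 lam β (n+1) =
        (sit 2 lam α n - sit 2 lam β n) * (sit 2 lam α n + sit 2 lam β n) := by
      rw [sit_succ, sit_succ]; ring
    rw [a4, map_mul, h V hα] at a3
    by_contra! hlt
    have h0 : (0 : V.ValueGroup) < V.valuation α := zero_lt_one.trans hα
    have := mul_lt_mul_of_pos_left hlt h0
    rw [mul_one] at this
    exact absurd this (not_lt.2 a3)

lemma two_case (h2 : (2 : K) ≠ 0) {α β : K} (hα : ¬ IsAlgebraic (ZMod p) α)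
    (hS : {lam : K | SPP 2 lam α ∧ SPP 2 lam β}.Infinite)
    (hc : IsAlgebraic (ZMod p) (α^2 - β^2)) : α^2 = β^2 := by
  by_contra hne
  have hc0 : α^2 - β^2 ≠ 0 := sub_ne_zero.2 hne
  have hfin := (((fin_kappa h2 α β 0 (le_refl 1)).union (fin_kappa h2 α β 1 (le_refl 1))).union
    (fin_kappa h2 α β (-1) (le_refl 1))).union (fin_kappa h2 α β 0 (show 1 ≤ 2 by norm_num))
  apply hS
  apply hfin.subset
  rintro lam ⟨s1, s2⟩
  have alg2 : IsAlgebraic (ZMod p) (2 : K) := by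
    have := isAlgebraic_algebraMap (R := ZMod p) (A := K) 2
    rwa [map_ofNat] at this
  set c := α^2 - β^2 with hcdef
  set x := sit 2 lam α with hx
  set y := sit 2 lam β with hy
  have hc1 : x 1 - y 1 = c := by
    simp only [hx, hy, sit_succ, sit_zero, hcdef]; ring
  have hrec : ∀ n, x (n+1) - y (n+1) = (x n - y n) * (x n + y n) := by
    intro n
    simp only [hx, hy, sit_succ]; ring
  have hrec2 : ∀ n, 2 * (x (n+1) + y (n+1)) = (x n + y n)^2 + (x n - y n)^2 + 4 * lam := by
    intro n
    simp only [hx, hy, sit_succ]; ring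
  have hu : ∀ V : ValuationSubring K, 1 < V.valuation α → V.valuation (x 1 + y 1) = V.valuation α := by
    intro V hV
    have e1 : x 1 + y 1 = 2 * x 1 - c := by rw [← hc1]; ring
    have e2 : V.valuation (2 * x 1) = V.valuation α := by
      rw [map_mul, val_const V.valuation alg2 h2, one_mul]
      exact spp_val _ le_rfl hV s1 s1 1
    rw [e1, Valuation.map_sub_eq_of_lt_left _ (by rw [e2, val_const V.valuation hc hc0]; exact hV), e2]
  have hut : ¬ IsAlgebraic (ZMod p) (x 1 + y 1) := by
    intro h
    obtain ⟨V, hV⟩ := exists_valuation hα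
    have := val_const_le V.valuation h
    rw [hu V hV] at this
    exact absurd hV (not_lt.2 this)
  have d2 : ∀ V : ValuationSubring K, 1 < V.valuation α → V.valuation (x 2 - y 2) = V.valuation α := by
    intro V hV
    rw [hrec 1, hc1, map_mul, hu V hV, val_const V.valuation hc hc0, one_mul]
  have k2 := two_step (p := p) s1 s2 2 d2
  change IsAlgebraic _ (x 2 + y 2) at k2
  by_cases k20 : x 2 + y 2 = 0
  · left; left; left; exact k20
  have d3 : ∀ V : ValuationSubring K, 1 < V.valuation α → V.valuation (x 3 - y 3) = V.valuation α := by
    intro V hV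
    rw [hrec 2, map_mul, d2 V hV, val_const V.valuation k2 k20, mul_one]
  have k3 := two_step (p := p) s1 s2 3 d3
  change IsAlgebraic _ (x 3 + y 3) at k3
  by_cases k30 : x 3 + y 3 = 0
  · right; exact k30
  have d4 : ∀ V : ValuationSubring K, 1 < V.valuation α → V.valuation (x 4 - y 4) = V.valuation α := by
    intro V hV
    rw [hrec 3, map_mul, d3 V hV, val_const V.valuation k3 k30, mul_one]
  have k4 := two_step (p := p) s1 s2 4 d4
  change IsAlgebraic _ (x 4 + y 4) at k4
  have key : ((x 2 + y 2)^2 - 1) * c^2 * (x 1 + y 1)^2 =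
      2 * (x 4 + y 4) - 2 * (x 3 + y 3) - (x 3 + y 3)^2 + (x 2 + y 2)^2 := by
    rw [hrec2 3, hrec2 2, hrec 2, hrec 1, hc1]; ring
  have alg1 : IsAlgebraic (ZMod p) (1 : K) := isAlgebraic_one
  have hκ : (x 2 + y 2)^2 - 1 = 0 := by
    by_contra hk
    have hw0 : ((x 2 + y 2)^2 - 1) * c^2 ≠ 0 := mul_ne_zero hk (pow_ne_zero _ hc0)
    have hw : IsAlgebraic (ZMod p) (((x 2 + y 2)^2 - 1) * c^2) := ((k2.pow 2).sub alg1).mul (hc.pow 2)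
    have hr : IsAlgebraic (ZMod p) (((x 2 + y 2)^2 - 1) * c^2 * (x 1 + y 1)^2) := by
      rw [key]
      exact (((alg2.mul k4).sub (alg2.mul k3)).sub (k3.pow 2)).add (k2.pow 2)
    have := hw.inv.mul hr
    rw [← mul_assoc, inv_mul_cancel₀ hw0, one_mul] at this
    exact hut (this.of_pow (by norm_num))
  have : (x 2 + y 2 - 1) * (x 2 + y 2 + 1) = 0 := by linear_combination hκ
  rcases mul_eq_zero.1 this with h | h
  · left; left; right; exact sub_eq_zero.1 h
  · left; right; exact eq_neg_of_add_eq_zero_left h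

end two

lemma omega_main {p : ℕ} [Fact p.Prime] (F : Type*) {Ω : Type*} [Field F] [Algebra (ZMod p)[X] F]
    [IsFractionRing (ZMod p)[X] F] [Field Ω] [Algebra (ZMod p)[X] Ω] [Algebra F Ω]
    [IsScalarTower (ZMod p)[X] F Ω] [Normal F Ω] [IsAlgClosed Ω] [CharP Ω p] [Algebra (ZMod p) Ω]
    {l e : ℕ} (he : 2 ≤ e) (hpe : ¬ p ∣ e) {α β : Ω} (hαX : α = algebraMap (ZMod p)[X] Ω X)
    (hα : ¬ IsAlgebraic (ZMod p) α)
    (hS : {lam : Ω | SPP (p^l*e) lam α ∧ SPP (p^l*e) lam β}.Infinite) :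
    α^(p^l*e) = β^(p^l*e) := by
  have hp := (Fact.out : p.Prime)
  have hq : 0 < p^l := pow_pos hp.pos l
  have hd : 2 ≤ p^l * e := by nlinarith
  have he' : (e : Ω) ≠ 0 := by rwa [Ne, CharP.cast_eq_zero_iff Ω p]
  haveI : NeZero (e : Ω) := ⟨he'⟩
  obtain ⟨ζ, hζ⟩ := HasEnoughRootsOfUnity.exists_primitiveRoot Ω e
  have hSm : ∀ V : ValuationSubring Ω, 1 < V.valuation α →
      Sm V.valuation (p^l*e) (α^(p^l*e) - β^(p^l*e)) := by
    intro V hV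
    rcases local_analysis V.valuation hζ he he' hV hS.nonempty with h | ⟨s0, hs0, h⟩
    · exact h
    · exfalso
      obtain ⟨G, hG1, hG2, hG3⟩ := missed_poly (p := p) (l := l) V.valuation hζ he hV hs0
      exact DL_core F V.valuation hd hαX hV hS G hG1 hG2 (fun lam h1 h2 => hG3 lam h1 (h lam h1 h2))
  have hc : IsAlgebraic (ZMod p) (α^(p^l*e) - β^(p^l*e)) := by
    apply isAlgebraic_of_val
    intro V
    rcases le_or_gt (V.valuation α) 1 with hV | hV
    · obtain ⟨lam, h1, h2⟩ := hS.nonempty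
      have : α^(p^l*e) - β^(p^l*e) = sit (p^l*e) lam α 1 - sit (p^l*e) lam β 1 := by
        rw [sit_succ, sit_succ, sit_zero, sit_zero]; ring
      rw [this]
      exact Valuation.map_sub_le _ (spp_val_small _ hd hV h1 h1 1) (spp_val_small _ hd hV h1 h2 1)
    · exact (hSm V hV).1
  rcases hd.lt_or_eq with h3 | h2
  · by_contra hne
    obtain ⟨V, hV⟩ := exists_valuation hα
    have := (hSm V hV).2 h3
    rw [val_const V.valuation hc (sub_ne_zero.2 hne)] at this
    exact lt_irrefl _ this
  · have hl : p^l = 1 ∧ e = 2 := by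
      have : p^l = 1 := by nlinarith
      exact ⟨this, by rw [this] at h2; omega⟩
    have h20 : (2 : Ω) ≠ 0 := by have := he'; rw [hl.2] at this; exact_mod_cast this
    rw [← h2] at hS hc ⊢
    exact two_case h20 hα hS hc

lemma transfer {p : ℕ} [Fact p.Prime] (F : Type*) {K : Type*} [Field F] [Algebra (ZMod p)[X] F]
    [IsFractionRing (ZMod p)[X] F] [Field K] [Algebra (ZMod p)[X] K] [Algebra F K]
    [IsScalarTower (ZMod p)[X] F K] [IsAlgClosed K] [CharP K p] [Algebra (ZMod p) K]
    {l e : ℕ} (he : 2 ≤ e) (hpe : ¬ p ∣ e) {α β : K} (hαX : α = algebraMap (ZMod p)[X] K X)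
    (hα : ¬ IsAlgebraic (ZMod p) α)
    (hS : {lam : K | SPP (p^l*e) lam α ∧ SPP (p^l*e) lam β}.Infinite) :
    α^(p^l*e) = β^(p^l*e) := by
  have hp := (Fact.out : p.Prime)
  have hq : 0 < p^l := pow_pos hp.pos l
  have hd : 2 ≤ p^l * e := by nlinarith
  have hαi : IsIntegral (ZMod p)[X] α := hαX ▸ isIntegral_algebraMap
  let Ω := algebraicClosure F K
  haveI : IsAlgClosed Ω := IsAlgClosure.isAlgClosed F
  haveI : Normal F Ω := inferInstance
  haveI : IsScalarTower (ZMod p)[X] F Ω := inferInstance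
  let ι : Ω →+* K := algebraMap Ω K
  haveI : CharP Ω p := (ι.charP_iff ι.injective p).2 inferInstance
  letI : Algebra (ZMod p) Ω := ZMod.algebra Ω p
  have hmem : ∀ z : K, IsIntegral (ZMod p)[X] z → ∃ w : Ω, ι w = z := by
    intro z hz
    exact ⟨⟨z, mem_algebraicClosure_iff.2 hz.tower_top.isAlgebraic⟩, rfl⟩
  obtain ⟨lam0, h1, h2⟩ := hS.nonempty
  obtain ⟨b, rfl⟩ := hmem β (integral_other hd hαi h1 h2)
  obtain ⟨a, rfl⟩ := hmem α hαi
  have haX : a = algebraMap (ZMod p)[X] Ω X := by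
    apply ι.injective
    rw [hαX]; rfl
  have haa : ¬ IsAlgebraic (ZMod p) a := by
    intro h
    apply hα
    obtain ⟨P, hP, hP0⟩ := h
    refine ⟨P, hP, ?_⟩
    have := congrArg ι hP0
    rw [map_zero, aeval_def, hom_eval₂] at this
    rw [aeval_def, ← this]
    congr 1
    exact Subsingleton.elim _ _
  have hS' : {lam : Ω | SPP (p^l*e) lam a ∧ SPP (p^l*e) lam b}.Infinite := by
    intro hf
    apply hS
    apply (hf.image ι).subset
    rintro lam ⟨g1, g2⟩
    obtain ⟨m, rfl⟩ := hmem lam (integral_lam hd hαi g1)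
    exact ⟨m, ⟨(spp_map ι).1 g1, (spp_map ι).1 g2⟩, rfl⟩
  have := omega_main F he hpe haX haa hS'
  rw [← map_pow, ← map_pow, this]

lemma only_if_e {p : ℕ} [Fact p.Prime] {K : Type*} [Field K] [IsAlgClosed K] [CharP K p]
    [Algebra (ZMod p) K] {l e : ℕ} (he : 2 ≤ e) (hpe : ¬ p ∣ e) {α β : K}
    (hα : ¬ IsAlgebraic (ZMod p) α)
    (hS : {lam : K | SPP (p^l*e) lam α ∧ SPP (p^l*e) lam β}.Infinite) :
    α^(p^l*e) = β^(p^l*e) := by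
  letI : Algebra (ZMod p)[X] K := (aeval (R := ZMod p) α).toRingHom.toAlgebra
  have hinj : Function.Injective (algebraMap (ZMod p)[X] K) := transcendental_iff_injective.1 hα
  haveI : FaithfulSMul (ZMod p)[X] K := (faithfulSMul_iff_algebraMap_injective _ _).2 hinj
  letI : Algebra (FractionRing (ZMod p)[X]) K := FractionRing.liftAlgebra (ZMod p)[X] K
  haveI : IsScalarTower (ZMod p)[X] (FractionRing (ZMod p)[X]) K :=
    FractionRing.isScalarTower_liftAlgebra (ZMod p)[X] K
  have hX : α = algebraMap (ZMod p)[X] K X := (aeval_X (R := ZMod p) α).symm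
  exact transfer (FractionRing (ZMod p)[X]) he hpe hX hα hS


section ifdir
variable {K : Type*} [Field K] {d : ℕ}

lemma spp_iff_range {lam x : K} : SPP d lam x ↔ (Set.range (sit d lam x)).Finite := by
  constructor
  · intro h
    obtain ⟨m, n, hmn, h⟩ := spp_iff.1 h
    apply ((Finset.range n).finite_toSet.image (sit d lam x)).subset
    rintro _ ⟨k, rfl⟩
    induction k using Nat.strong_induction_on with
    | _ k ih =>
      by_cases hk : k < n
      · exact ⟨k, by simpa using hk, rfl⟩
      · have e1 : sit d lam x k = sit d lam x (m + (k - n)) := by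
          rw [← sit_add, h, sit_add]; congr 1; omega
        rw [e1]
        exact ih _ (by omega)
  · intro h
    by_contra hc
    apply Set.infinite_range_of_injective (f := sit d lam x) _ h
    intro m n hmn
    by_contra hne
    rcases Nat.lt_or_gt_of_ne hne with h1 | h1
    · exact hc (spp_iff.2 ⟨m, n, h1, hmn⟩)
    · exact hc (spp_iff.2 ⟨n, m, h1, hmn.symm⟩)

variable {p : ℕ} [Fact p.Prime] [Algebra (ZMod p) K]

lemma finite_pow_range {z : K} (hz : IsAlgebraic (ZMod p) z) : (Set.range (fun n : ℕ => z^n)).Finite := by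
  have : FiniteDimensional (ZMod p) (IntermediateField.adjoin (ZMod p) {z}) :=
    IntermediateField.adjoin.finiteDimensional hz.isIntegral
  have : Finite (IntermediateField.adjoin (ZMod p) {z}) := Module.finite_of_finite (ZMod p)
  apply (Set.toFinite (IntermediateField.adjoin (ZMod p) {z} : Set K)).subset
  rintro _ ⟨n, rfl⟩
  exact pow_mem (IntermediateField.mem_adjoin_simple_self _ _) n

lemma spp_of_alg {lam x : K} (hx : IsAlgebraic (ZMod p) x) (hl : IsAlgebraic (ZMod p) lam) :
    SPP d lam x := by
  have : FiniteDimensional (ZMod p) (IntermediateField.adjoin (ZMod p) {x, lam}) := by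
    apply IntermediateField.finiteDimensional_adjoin
    rintro z (rfl | rfl)
    · exact hx.isIntegral
    · exact hl.isIntegral
  have : Finite (IntermediateField.adjoin (ZMod p) {x, lam}) := Module.finite_of_finite (ZMod p)
  rw [spp_iff_range]
  apply (Set.toFinite (IntermediateField.adjoin (ZMod p) {x, lam} : Set K)).subset
  rintro _ ⟨n, rfl⟩
  have h1 : x ∈ IntermediateField.adjoin (ZMod p) {x, lam} :=
    IntermediateField.subset_adjoin _ _ (by simp)
  have h2 : lam ∈ IntermediateField.adjoin (ZMod p) {x, lam} :=
    IntermediateField.subset_adjoin _ _ (by simp)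
  induction n with
  | zero => exact h1
  | succ n ih => rw [sit_succ]; exact add_mem (pow_mem ih _) h2

lemma infinite_alg [IsAlgClosed K] : {z : K | IsAlgebraic (ZMod p) z}.Infinite := by
  have : IsAlgClosed (algebraicClosure (ZMod p) K) := IsAlgClosure.isAlgClosed (ZMod p)
  have : Infinite (algebraicClosure (ZMod p) K) := inferInstance
  exact Set.infinite_of_injective_forall_mem (f := fun z : algebraicClosure (ZMod p) K => (z : K))
    Subtype.val_injective (fun z => mem_algebraicClosure_iff.1 z.2)

lemma exists_period [IsAlgClosed K] (hd : 2 ≤ d) {α : K} (hα : ¬ IsAlgebraic (ZMod p) α)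
    {n : ℕ} (hn : n.Prime) :
    ∃ lam : K, Function.minimalPeriod (fun x : K => x^d + lam) α = n := by
  set lam0 := α - α^d with hlam0
  obtain ⟨k, rfl⟩ : ∃ k, n = k + 1 := ⟨n - 1, by have := hn.pos; omega⟩
  have hk : 1 ≤ k := by have := hn.two_le; omega
  let P : K[X] := sP d α (k+1) - C α
  obtain ⟨hm, hdeg⟩ := sP_monic_deg (x := α) hd k
  have hdk : 2 ≤ d^k := hd.trans (Nat.le_self_pow (by omega) d)
  have hPm : P.Monic := by
    apply hm.sub_of_left
    apply degree_lt_degree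
    rw [natDegree_C, hdeg]; omega
  have hPd : P.natDegree = d^k := by rw [natDegree_sub_C, hdeg]
  have hfix : ∀ j, sit d lam0 α j = α := by
    intro j
    induction j with
    | zero => rfl
    | succ j ih => rw [sit_succ, ih, hlam0]; ring
  set μ := (d : K) * α^(d-1) with hμ
  have hD : ∀ j, (derivative (sP d α j)).eval lam0 = ∑ i ∈ Finset.range j, μ^i := by
    intro j
    induction j with
    | zero => simp [sP]
    | succ j ih =>
      rw [sP, derivative_add, derivative_pow, derivative_X]
      simp only [eval_add, eval_mul, eval_pow, eval_one, eval_C, sP_eval, hfix, ih]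
      rw [Finset.sum_range_succ']
      simp only [pow_succ, ← Finset.sum_mul, pow_zero, one_mul, hμ]
      ring
  have hex : ∃ lam, P.IsRoot lam ∧ lam ≠ lam0 := by
    by_contra! hcon
    have hsp : P.Splits := IsAlgClosed.splits P
    have hroots : P.roots = Multiset.replicate (d^k) lam0 := by
      rw [Multiset.eq_replicate]
      refine ⟨by rw [← hsp.natDegree_eq_card_roots, hPd], fun b hb => hcon b (isRoot_of_mem_roots hb)⟩
    have hP := hsp.eq_prod_roots_of_monic hPm
    rw [hroots, Multiset.map_replicate, Multiset.prod_replicate] at hP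
    have h1 : (derivative P).eval lam0 = 0 := by
      rw [hP, derivative_pow]
      simp [show d^k - 1 ≠ 0 by omega]
    have h2 : (derivative P).eval lam0 = ∑ i ∈ Finset.range (k+1), μ^i := by
      simp only [P, derivative_sub, derivative_C, sub_zero, hD]
    have h3 := geom_sum_mul μ (k+1)
    rw [← h2, h1, zero_mul] at h3
    have h4 : μ^(k+1) = 1 := (sub_eq_zero.1 h3.symm)
    apply hα
    have hdalg : IsAlgebraic (ZMod p) (d : K) := by
      have := isAlgebraic_algebraMap (R := ZMod p) (A := K) (d : ZMod p)
      rwa [map_natCast] at this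
    have hd0 : ((d : K)^(k+1)) ≠ 0 := by
      intro h
      rw [hμ, mul_pow, h, zero_mul] at h4
      exact zero_ne_one h4
    have h5 : α^((d-1)*(k+1)) = ((d : K)^(k+1))⁻¹ := by
      rw [hμ, mul_pow, ← pow_mul] at h4
      exact eq_inv_of_mul_eq_one_right h4
    have h6 : IsAlgebraic (ZMod p) (α^((d-1)*(k+1))) := by
      rw [h5]; exact (hdalg.pow _).inv
    exact h6.of_pow (Nat.mul_pos (by omega) (by omega))
  obtain ⟨lam, hr, hne⟩ := hex
  refine ⟨lam, ?_⟩
  haveI : Fact (k+1).Prime := ⟨hn⟩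
  apply Function.minimalPeriod_eq_prime
  · have : sit d lam α (k+1) = α := by
      simp only [P, IsRoot, eval_sub, sP_eval, eval_C] at hr
      exact sub_eq_zero.1 hr
    exact this
  · intro h
    apply hne
    have : α^d + lam = α := h
    rw [hlam0]; linear_combination this

lemma infinite_one {K : Type*} [Field K] (p : ℕ) [Fact p.Prime] [Algebra (ZMod p) K] {d : ℕ} [IsAlgClosed K] (hd : 2 ≤ d) (α : K) : {lam : K | SPP d lam α}.Infinite := by
  by_cases hα : IsAlgebraic (ZMod p) α
  · exact (infinite_alg (p := p)).mono (fun lam hl => spp_of_alg hα hl)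
  · choose f hf using fun n : Nat.Primes => exists_period hd hα n.2
    apply Set.infinite_of_injective_forall_mem (f := f)
    · intro m n h
      apply Subtype.ext
      rw [← hf m, ← hf n, h]
    · intro n
      refine ⟨0, n, n.2.pos, ?_⟩
      have := Function.iterate_minimalPeriod (f := fun x : K => x^d + f n) (x := α)
      rw [hf n] at this
      exact this.symm

lemma sit_sub_char [CharP K p] {l : ℕ} (lam a b : K) (n : ℕ) :
    sit (p^l) lam b n - sit (p^l) lam a n = (b - a)^((p^l)^n) := by
  induction n with
  | zero => simp [sit_zero]
  | succ n ih =>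
    rw [sit_succ, sit_succ, add_sub_add_right_eq_sub, ← sub_pow_char_pow, ih, ← pow_mul, ← pow_succ]

lemma case_two_if [CharP K p] {l : ℕ} {lam a b : K} (hab : IsAlgebraic (ZMod p) (b - a))
    (h : SPP (p^l) lam a) : SPP (p^l) lam b := by
  rw [spp_iff_range] at h ⊢
  apply (h.add (finite_pow_range hab)).subset
  rintro _ ⟨n, rfl⟩
  exact Set.mem_add.2 ⟨_, ⟨n, rfl⟩, _, ⟨(p^l)^n, rfl⟩, by
    simp only [← sit_sub_char (l := l) lam a b n]; ring⟩

lemma case_three_if {lam a b : K} (hab : a^d = b^d) (h : SPP d lam a) : SPP d lam b := by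
  obtain ⟨m, n, hmn, h⟩ := spp_iff.1 h
  have e : ∀ k, sit d lam b (k+1) = sit d lam a (k+1) := by
    intro k
    induction k with
    | zero => rw [sit_succ, sit_succ, sit_zero, sit_zero, hab]
    | succ k ih => rw [sit_succ, ih, ← sit_succ]
  refine spp_iff.2 ⟨m+1, n+1, by omega, ?_⟩
  rw [e, e, sit_succ, sit_succ, h]

lemma e_one [CharP K p] {l : ℕ} (hl : 2 ≤ p^l) {lam a b : K} (h1 : SPP (p^l) lam a)
    (h2 : SPP (p^l) lam b) : IsAlgebraic (ZMod p) (b - a) := by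
  rw [spp_iff_range] at h1 h2
  have hf : (Set.range (fun n : ℕ => (b - a)^((p^l)^n))).Finite := by
    apply (h2.sub h1).subset
    rintro _ ⟨n, rfl⟩
    exact Set.mem_sub.2 ⟨_, ⟨n, rfl⟩, _, ⟨n, rfl⟩, sit_sub_char (l := l) lam a b n⟩
  by_contra hna
  apply Set.infinite_range_of_injective _ hf
  intro m n hmn
  simp only at hmn
  by_contra hne
  have hne' : (p^l)^m ≠ (p^l)^n := fun h => hne (Nat.pow_right_injective hl h)
  apply hna
  refine ⟨X^((p^l)^m) - X^((p^l)^n), ?_, by simp [hmn]⟩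
  intro h
  rw [sub_eq_zero] at h
  have := congrArg natDegree h
  simp only [natDegree_X_pow] at this
  exact hne' this

lemma only_if_K [IsAlgClosed K] [CharP K p] (hd : 2 ≤ d) {a b : K} (ha : ¬ IsAlgebraic (ZMod p) a)
    (hS : {lam : K | SPP d lam a ∧ SPP d lam b}.Infinite) :
    (∃ l : ℕ, 0 < l ∧ d = p^l ∧ IsAlgebraic (ZMod p) (b - a)) ∨ a^d = b^d := by
  have hp := (Fact.out : p.Prime)
  obtain ⟨l, e, hpe, rfl⟩ := Nat.exists_eq_pow_mul_and_not_dvd (n := d) (by omega) p hp.ne_one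
  rcases Nat.lt_or_ge e 2 with he | he
  · left
    have he1 : e = 1 := by
      have : e ≠ 0 := by rintro rfl; simp at hpe
      omega
    subst he1
    rw [mul_one] at hd hS ⊢
    refine ⟨l, ?_, rfl, ?_⟩
    · rcases Nat.eq_zero_or_pos l with rfl | h
      · simp at hd
      · exact h
    · obtain ⟨lam, h1, h2⟩ := hS.nonempty
      exact e_one hd h1 h2
  · right; exact only_if_e he hpe ha hS

end ifdir

theorem main_K {p : ℕ} [Fact p.Prime] {K : Type*} [Field K] [IsAlgClosed K] [CharP K p]
    [Algebra (ZMod p) K] {d : ℕ} (hd : 2 ≤ d) (a b : K) :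
    {lam : K | SPP d lam a ∧ SPP d lam b}.Infinite ↔
      ((IsAlgebraic (ZMod p) a ∧ IsAlgebraic (ZMod p) b) ∨
        (∃ l : ℕ, 0 < l ∧ d = p^l ∧ IsAlgebraic (ZMod p) (b - a)) ∨ a^d = b^d) := by
  constructor
  · intro hS
    by_cases ha : IsAlgebraic (ZMod p) a
    · by_cases hb : IsAlgebraic (ZMod p) b
      · exact Or.inl ⟨ha, hb⟩
      · right
        have hS' : {lam : K | SPP d lam b ∧ SPP d lam a}.Infinite :=
          hS.mono (fun lam h => ⟨h.2, h.1⟩)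
        rcases only_if_K hd hb hS' with ⟨l, h1, h2, h3⟩ | h
        · left; exact ⟨l, h1, h2, by simpa using h3.neg⟩
        · right; exact h.symm
    · right; exact only_if_K hd ha hS
  · rintro (⟨ha, hb⟩ | ⟨l, hl, rfl, h⟩ | h)
    · exact (infinite_alg (p := p)).mono (fun lam hl => ⟨spp_of_alg ha hl, spp_of_alg hb hl⟩)
    · exact (infinite_one p hd a).mono (fun lam hl => ⟨hl, case_two_if h hl⟩)
    · exact (infinite_one p hd a).mono (fun lam hl => ⟨hl, case_three_if h hl⟩)


/-- For `f_λ(x) = x^d + λ` over an algebraic closure of a field `L` of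
characteristic `p`, the set of parameters `λ` for which both starting points `α, β ∈ L`
are preperiodic is infinite iff (1) both `α` and `β` are algebraic over `𝔽_p`, or
(2) `d` is a positive power of `p` and `β - α` is algebraic over `𝔽_p`, or (3) `α^d = β^d`. -/
theorem simultaneously_preperiodic_char_p
    (p : ℕ) [Fact p.Prime] (L : Type*) [Field L] [CharP L p] [Algebra (ZMod p) L]
    (α β : L) (d : ℕ) (hd : 2 ≤ d) :
    {lam : AlgebraicClosure L |
        (∃ m n : ℕ, m < n ∧
          (fun x : AlgebraicClosure L => x ^ d + lam)^[m] (algebraMap L (AlgebraicClosure L) α)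
            = (fun x : AlgebraicClosure L => x ^ d + lam)^[n]
                (algebraMap L (AlgebraicClosure L) α)) ∧
        (∃ m n : ℕ, m < n ∧
          (fun x : AlgebraicClosure L => x ^ d + lam)^[m] (algebraMap L (AlgebraicClosure L) β)
            = (fun x : AlgebraicClosure L => x ^ d + lam)^[n]
                (algebraMap L (AlgebraicClosure L) β))}.Infinite
      ↔ ((IsAlgebraic (ZMod p) α ∧ IsAlgebraic (ZMod p) β) ∨
          (∃ ℓ : ℕ, 0 < ℓ ∧ d = p ^ ℓ ∧ IsAlgebraic (ZMod p) (β - α)) ∨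
          α ^ d = β ^ d) := by
  have hinj : Function.Injective (algebraMap L (AlgebraicClosure L)) :=
    (algebraMap L (AlgebraicClosure L)).injective
  have : CharP (AlgebraicClosure L) p := charP_of_injective_algebraMap hinj p
  have h := main_K (p := p) hd (algebraMap L (AlgebraicClosure L) α)
    (algebraMap L (AlgebraicClosure L) β)
  rw [← map_sub, ← map_pow, ← map_pow, hinj.eq_iff, isAlgebraic_algebraMap_iff hinj,
    isAlgebraic_algebraMap_iff hinj, isAlgebraic_algebraMap_iff hinj] at h
  exact h
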